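/- Theorem 2.1 (Rate separation for uniform diffusion). Suppose the noise-schedule assumption holds at every σ ∈ (0,1). Fix x ∈ X, a coordinate h ∈ {1,…,H}, a token a ≠ x^h, and set z = x^{h→a} and ρ = p_data(proj_D(z))/p_data(proj_D(x)). For each σ ∈ (0,1), with t = t_σ(T), the limit L(σ) := lim_{T→∞} q^h_{t−1|t}(a | x)/(β^{(T)}_t / K) exists. Moreover there exist C > 0 and σ₀ ∈ (0,1) such that for all σ ∈ (0,σ₀): (i) if d(z,D) < d(x,D) (toward support) then |L(σ) − (σ/K)^{−1}·ρ| ≤ C; (ii) if d(z,D) = d(x,D) (same distance) then |L(σ) − ρ| ≤ C·σ; (iii) if d(z,D) > d(x,D) (away from support) then |L(σ) − (σ/K)·ρ| ≤ C·σ². -/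

import Mathlib

open scoped Classical
open Filter

/-- Uniform-corrupted marginal `q_σ(x)`. -/
noncomputable def qUnif (K H : ℕ) (p : (Fin H → Fin K) → ℝ) (σ : ℝ)
    (x : Fin H → Fin K) : ℝ :=
  ∑ x0 : Fin H → Fin K, p x0 *
    ∏ i : Fin H, ((1 - σ) * (if x i = x0 i then (1 : ℝ) else 0) + σ / K)

/-- Hamming distance from `x` to the support `D = {z : p z ≠ 0}` of `p`. -/
noncomputable def distSupp (K H : ℕ) (p : (Fin H → Fin K) → ℝ)
    (x : Fin H → Fin K) : ℕ :=
  sInf {n : ℕ | ∃ z : Fin H → Fin K, p z ≠ 0 ∧ hammingDist x z = n}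

/-- Total `p`-mass of the set `proj_D(x)` of nearest in-support strings to `x`. -/
noncomputable def projMass (K H : ℕ) (p : (Fin H → Fin K) → ℝ)
    (x : Fin H → Fin K) : ℝ :=
  ∑ z ∈ Finset.univ.filter
      (fun z : Fin H → Fin K => p z ≠ 0 ∧ hammingDist x z = distSupp K H p x), p z

/-- Cumulative noise level `σ^{(T)}_t = 1 − ∏_{s=1}^t (1 − β^{(T)}_s)`. -/
noncomputable def cumNoise (β : ℕ → ℕ → ℝ) (T t : ℕ) : ℝ :=
  1 - ∏ s ∈ Finset.Icc 1 t, (1 - β T s)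

/-- One-step uniform forward kernel `q_{t|t−1}(y'|y)` with per-step rate `b`. -/
noncomputable def stepUnif (K H : ℕ) (b : ℝ) (y' y : Fin H → Fin K) : ℝ :=
  ∏ i : Fin H, ((1 - b) * (if y' i = y i then (1 : ℝ) else 0) + b / K)

/-- Exact single-token reverse probability `q^h_{t−1|t}(a|x)`. -/
noncomputable def revUnif (K H : ℕ) (p : (Fin H → Fin K) → ℝ) (β : ℕ → ℕ → ℝ)
    (T t : ℕ) (h : Fin H) (a : Fin K) (x : Fin H → Fin K) : ℝ :=
  (∑ y ∈ Finset.univ.filter (fun y : Fin H → Fin K => y h = a),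
      qUnif K H p (cumNoise β T (t - 1)) y * stepUnif K H (β T t) x y)
    / qUnif K H p (cumNoise β T t) x

/-!
Write `d` for the Hamming distance to the support and `ε = σ / K`. Each summand of `q_σ(x)` is
`p(x₀) (1 - σ + ε)^(H - d(x, x₀)) ε^d(x, x₀)`, so `q_σ(x) = ε^d(x) g_σ(x)` with `g_σ(x)` polynomial
in `σ`, positive on `[0, 1]`, and `g_0(x) = p(proj_D(x))`. Hence, for any two strings,
`q_σ(z) / q_σ(x) = ε^(d(z) - d(x)) (ρ + O(σ))` with `ρ = p(proj_D(z)) / p(proj_D(x))`, and the three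
regimes are the exponents `-1`, `0` and `1`.

The limit `L(σ)` is this ratio for `z = x^{h→a}`: divided by `β / K`, the one-step kernel from `y`
to `x` with `y ≠ x` tends to `1` if `y` and `x` differ in exactly one coordinate and to `0`
otherwise, so among the strings `y` with `y^h = a` only `z` survives.
-/

section Hamming

variable {ι : Type*} {α : ι → Type*} [Fintype ι] [DecidableEq ι] [∀ i, DecidableEq (α i)]

lemma hammingDist_update_le_one (x : ∀ i, α i) (h : ι) (a : α h) :
    hammingDist x (Function.update x h a) ≤ 1 := by
  refine (Finset.card_le_card fun i hi => ?_).trans (Finset.card_singleton h).le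
  by_contra hne
  simp [Function.update_of_ne (Finset.notMem_singleton.1 hne)] at hi

lemma hammingDist_eq_one_iff_eq_update {x y : ∀ i, α i} {h : ι} (hxy : x h ≠ y h) :
    hammingDist x y = 1 ↔ y = Function.update x h (y h) := by
  refine ⟨fun hd => Function.eq_update_iff.2 ⟨rfl, fun i hi => ?_⟩, fun hy => ?_⟩
  · by_contra hyx
    exact hi (Finset.card_le_one.1 hd.le i (by simpa using Ne.symm hyx) h (by simpa using hxy))
  · refine le_antisymm ?_ (hammingDist_pos.2 fun e => hxy (congrFun e h))
    rw [hy]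
    exact hammingDist_update_le_one x h (y h)

lemma sum_filter_apply_eq_mul_ite_hammingDist {R : Type*} [NonAssocSemiring R]
    [∀ i, Fintype (α i)] (f : (∀ i, α i) → R) {x : ∀ i, α i} {h : ι} {a : α h} (ha : a ≠ x h) :
    ∑ y with y h = a, f y * (if hammingDist x y = 1 then 1 else 0) =
      f (Function.update x h a) := by
  have hne : x h ≠ Function.update x h a h := by simpa using ha.symm
  rw [Finset.sum_eq_single_of_mem (Function.update x h a) (by simp)]
  · simp [(hammingDist_eq_one_iff_eq_update hne).2]
  · rintro y hy hyz
    obtain rfl : y h = a := by simpa using hy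
    simp [hammingDist_eq_one_iff_eq_update ha.symm, hyz]

end Hamming

section Support

variable {K H : ℕ} {p : (Fin H → Fin K) → ℝ}

lemma distSupp_le_hammingDist (x : Fin H → Fin K) {z : Fin H → Fin K} (hz : p z ≠ 0) :
    distSupp K H p x ≤ hammingDist x z :=
  Nat.sInf_le ⟨z, hz, rfl⟩

lemma exists_hammingDist_eq_distSupp (hp : p ≠ 0) (x : Fin H → Fin K) :
    ∃ z, p z ≠ 0 ∧ hammingDist x z = distSupp K H p x := by
  obtain ⟨z, hz⟩ := Function.ne_iff.1 hp
  exact Nat.sInf_mem (s := {n | ∃ z, p z ≠ 0 ∧ hammingDist x z = n}) ⟨_, z, hz, rfl⟩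

lemma distSupp_le_hammingDist_add (hp : p ≠ 0) (x y : Fin H → Fin K) :
    distSupp K H p x ≤ hammingDist x y + distSupp K H p y := by
  obtain ⟨z, hz, hd⟩ := exists_hammingDist_eq_distSupp hp y
  rw [← hd]
  exact (distSupp_le_hammingDist x hz).trans (hammingDist_triangle x y z)

lemma distSupp_update_le_add_one (hp : p ≠ 0) (x : Fin H → Fin K) (h : Fin H) (a : Fin K) :
    distSupp K H p (Function.update x h a) ≤ distSupp K H p x + 1 := by
  have hlip := distSupp_le_hammingDist_add hp (Function.update x h a) x
  have hd := hammingDist_update_le_one x h a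
  rw [hammingDist_comm] at hlip
  lia

lemma distSupp_le_update_add_one (hp : p ≠ 0) (x : Fin H → Fin K) (h : Fin H) (a : Fin K) :
    distSupp K H p x ≤ distSupp K H p (Function.update x h a) + 1 := by
  have hlip := distSupp_le_hammingDist_add hp x (Function.update x h a)
  have hd := hammingDist_update_le_one x h a
  lia

lemma projMass_pos (hp0 : 0 ≤ p) (hp : p ≠ 0) (x : Fin H → Fin K) : 0 < projMass K H p x := by
  obtain ⟨z, hz, hd⟩ := exists_hammingDist_eq_distSupp hp x
  exact Finset.sum_pos' (fun v _ => hp0 v) ⟨z, by simp [hz, hd], (hp0 z).lt_of_ne' hz⟩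

end Support

section Kernel

variable {K H : ℕ}

lemma stepUnif_eq_pow (b : ℝ) (x y : Fin H → Fin K) :
    stepUnif K H b x y =
      (1 - b + b / K) ^ (H - hammingDist x y) * (b / K) ^ hammingDist x y := by
  have hcard : Finset.card {i | x i = y i} = H - hammingDist x y := by
    have := Finset.card_filter_add_card_filter_not (s := Finset.univ) (fun i => x i = y i)
    rw [Finset.card_fin] at this
    exact Nat.eq_sub_of_add_eq this
  calc stepUnif K H b x y = ∏ i, if x i = y i then 1 - b + b / K else b / K :=
        Finset.prod_congr rfl fun i _ => by split_ifs <;> simp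
    _ = _ := by rw [Finset.prod_ite, Finset.prod_const, Finset.prod_const, hcard]; rfl

lemma stepUnif_pos {b : ℝ} (hb : b ∈ Set.Ioc 0 1) (x y : Fin H → Fin K) :
    0 < stepUnif K H b x y := by
  refine Finset.prod_pos fun i _ => add_pos_of_nonneg_of_pos ?_ ?_
  · exact mul_nonneg (sub_nonneg.2 hb.2) (by split_ifs <;> norm_num)
  · exact div_pos hb.1 (Nat.cast_pos.2 (x i).pos)

lemma tendsto_stepUnif_div {x y : Fin H → Fin K} (hxy : x ≠ y) :
    Tendsto (fun b => stepUnif K H b x y / (b / K)) (nhdsWithin 0 {0}ᶜ)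
      (nhds (if hammingDist x y = 1 then 1 else 0)) := by
  obtain ⟨i, -⟩ := Function.ne_iff.1 hxy
  have hK : (K : ℝ) ≠ 0 := Nat.cast_ne_zero.2 (x i).pos.ne'
  obtain ⟨d, hd⟩ := Nat.exists_eq_succ_of_ne_zero (hammingDist_ne_zero.2 hxy)
  have hlim : Tendsto (fun b : ℝ => (1 - b + b / K) ^ (H - hammingDist x y) * (b / K) ^ d)
      (nhds 0) (nhds (if hammingDist x y = 1 then 1 else 0)) :=
    Continuous.tendsto' (by fun_prop) _ _ (by simp [hd, zero_pow_eq])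
  refine (hlim.mono_left nhdsWithin_le_nhds).congr' ?_
  filter_upwards [self_mem_nhdsWithin] with b hb
  rw [stepUnif_eq_pow, hd, pow_succ, ← mul_assoc, mul_div_cancel_right₀ _ (div_ne_zero hb hK)]

end Kernel

section Marginal

variable {K H : ℕ} {p : (Fin H → Fin K) → ℝ}

lemma qUnif_eq_sum_stepUnif (p : (Fin H → Fin K) → ℝ) (σ : ℝ) (x : Fin H → Fin K) :
    qUnif K H p σ x = ∑ x0, p x0 * stepUnif K H σ x x0 :=
  rfl

lemma continuous_qUnif (p : (Fin H → Fin K) → ℝ) (x : Fin H → Fin K) :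
    Continuous fun σ => qUnif K H p σ x := by
  unfold qUnif
  fun_prop

lemma qUnif_pos (hp0 : 0 ≤ p) (hp : p ≠ 0) {σ : ℝ} (hσ : σ ∈ Set.Ioc 0 1) (x : Fin H → Fin K) :
    0 < qUnif K H p σ x := by
  obtain ⟨z, hz⟩ := Function.ne_iff.1 hp
  rw [qUnif_eq_sum_stepUnif]
  exact Finset.sum_pos' (fun v _ => mul_nonneg (hp0 v) (stepUnif_pos hσ x v).le)
    ⟨z, Finset.mem_univ z, mul_pos ((hp0 z).lt_of_ne' hz) (stepUnif_pos hσ x z)⟩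

/-- The marginal `q_σ(x)` divided by its leading power `(σ / K) ^ d(x, D)`, as a polynomial in `σ`.
The exponent `d(x, x₀) - d(x, D)` truncates only outside the support, where the weight is `0`. -/
noncomputable def rescaledMarginal (K H : ℕ) (p : (Fin H → Fin K) → ℝ) (σ : ℝ)
    (x : Fin H → Fin K) : ℝ :=
  ∑ x0, p x0 * ((1 - σ + σ / K) ^ (H - hammingDist x x0) *
    (σ / K) ^ (hammingDist x x0 - distSupp K H p x))

lemma qUnif_eq_pow_mul_rescaledMarginal (p : (Fin H → Fin K) → ℝ) (σ : ℝ) (x : Fin H → Fin K) :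
    qUnif K H p σ x = (σ / K) ^ distSupp K H p x * rescaledMarginal K H p σ x := by
  rw [qUnif_eq_sum_stepUnif, rescaledMarginal, Finset.mul_sum]
  refine Finset.sum_congr rfl fun x0 _ => ?_
  rcases eq_or_ne (p x0) 0 with h0 | h0
  · simp [h0]
  · rw [stepUnif_eq_pow, ← pow_mul_pow_sub (σ / K) (distSupp_le_hammingDist x h0)]
    ring

lemma rescaledMarginal_zero (p : (Fin H → Fin K) → ℝ) (x : Fin H → Fin K) :
    rescaledMarginal K H p 0 x = projMass K H p x := by
  rw [rescaledMarginal, projMass, Finset.sum_filter]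
  refine Finset.sum_congr rfl fun x0 _ => ?_
  rcases eq_or_ne (p x0) 0 with h0 | h0
  · simp [h0]
  · have hle := distSupp_le_hammingDist x h0
    simp [h0, zero_pow_eq, Nat.sub_eq_zero_iff_le, hle.ge_iff_eq']

lemma contDiff_rescaledMarginal (p : (Fin H → Fin K) → ℝ) (x : Fin H → Fin K) :
    ContDiff ℝ 1 fun σ => rescaledMarginal K H p σ x := by
  unfold rescaledMarginal
  fun_prop

lemma rescaledMarginal_pos (hp0 : 0 ≤ p) (hp : p ≠ 0) {σ : ℝ} (hσ : σ ∈ Set.Icc 0 1)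
    (x : Fin H → Fin K) : 0 < rescaledMarginal K H p σ x := by
  rcases hσ.1.eq_or_lt with rfl | hpos
  · rw [rescaledMarginal_zero]
    exact projMass_pos hp0 hp x
  · have hq := qUnif_pos hp0 hp ⟨hpos, hσ.2⟩ x
    rw [qUnif_eq_pow_mul_rescaledMarginal] at hq
    exact pos_of_mul_pos_right hq (by positivity)

lemma exists_abs_rescaledMarginal_div_sub_le (hp0 : 0 ≤ p) (hp : p ≠ 0) (x z : Fin H → Fin K) :
    ∃ M > 0, ∀ σ ∈ Set.Icc (0 : ℝ) 1,
      |rescaledMarginal K H p σ z / rescaledMarginal K H p σ x -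
        projMass K H p z / projMass K H p x| ≤ M * σ := by
  have hsmooth : ContDiffOn ℝ 1
      (fun σ => rescaledMarginal K H p σ z / rescaledMarginal K H p σ x) (Set.Icc 0 1) :=
    (contDiff_rescaledMarginal p z).contDiffOn.div (contDiff_rescaledMarginal p x).contDiffOn
      fun σ hσ => (rescaledMarginal_pos hp0 hp hσ x).ne'
  obtain ⟨M, hM⟩ := hsmooth.exists_lipschitzOnWith one_ne_zero (convex_Icc 0 1) isCompact_Icc
  refine ⟨M + 1, by positivity, fun σ hσ => ?_⟩
  have hlip := hM.dist_le_mul σ hσ 0 (by simp)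
  simp only [Real.dist_eq, sub_zero, abs_of_nonneg hσ.1, rescaledMarginal_zero] at hlip
  linarith [hσ.1]

end Marginal

section Score

variable {K H : ℕ} {p : (Fin H → Fin K) → ℝ}

/-- The concrete score `q_σ(z) / q_σ(x)`: the discrete analogue of the score `∇ log q_σ`, through
which reverse diffusion rates from `x` to `z` are expressed. -/
noncomputable def concreteScore (K H : ℕ) (p : (Fin H → Fin K) → ℝ) (σ : ℝ)
    (x z : Fin H → Fin K) : ℝ :=
  qUnif K H p σ z / qUnif K H p σ x

lemma concreteScore_eq_zpow_mul (p : (Fin H → Fin K) → ℝ) {σ : ℝ} (hσ : σ / K ≠ 0)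
    (x z : Fin H → Fin K) :
    concreteScore K H p σ x z = (σ / K) ^ (distSupp K H p z - distSupp K H p x : ℤ) *
      (rescaledMarginal K H p σ z / rescaledMarginal K H p σ x) := by
  rw [concreteScore, qUnif_eq_pow_mul_rescaledMarginal, qUnif_eq_pow_mul_rescaledMarginal,
    mul_div_mul_comm, zpow_sub₀ hσ, zpow_natCast, zpow_natCast]

lemma exists_abs_concreteScore_sub_le (hK : 0 < K) (hp0 : 0 ≤ p) (hp : p ≠ 0)
    (x z : Fin H → Fin K) :
    ∃ M > 0, ∀ σ ∈ Set.Ioc (0 : ℝ) 1,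
      |concreteScore K H p σ x z - (σ / K) ^ (distSupp K H p z - distSupp K H p x : ℤ) *
        (projMass K H p z / projMass K H p x)| ≤
      (σ / K) ^ (distSupp K H p z - distSupp K H p x : ℤ) * (M * σ) := by
  obtain ⟨M, hM, hbound⟩ := exists_abs_rescaledMarginal_div_sub_le hp0 hp x z
  refine ⟨M, hM, fun σ hσ => ?_⟩
  have hε : 0 < σ / K := div_pos hσ.1 (Nat.cast_pos.2 hK)
  rw [concreteScore_eq_zpow_mul p hε.ne', ← mul_sub, abs_mul, abs_of_pos (zpow_pos hε _)]
  exact mul_le_mul_of_nonneg_left (hbound σ (Set.Ioc_subset_Icc_self hσ)) (zpow_pos hε _).le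

end Score

section Reverse

variable {K H : ℕ} {p : (Fin H → Fin K) → ℝ} {β : ℕ → ℕ → ℝ}
  {ι : Type*} {l : Filter ι} {T t : ι → ℕ} {σ : ℝ}

lemma one_sub_cumNoise_succ (β : ℕ → ℕ → ℝ) (T t : ℕ) :
    1 - cumNoise β T (t + 1) = (1 - cumNoise β T t) * (1 - β T (t + 1)) := by
  simp only [cumNoise, sub_sub_cancel]
  exact Finset.prod_Icc_succ_top (by lia) _

lemma tendsto_cumNoise_pred (ht : ∀ᶠ n in l, 1 ≤ t n)
    (hσ : Tendsto (fun n => cumNoise β (T n) (t n)) l (nhds σ))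
    (hβ : Tendsto (fun n => β (T n) (t n)) l (nhds 0)) :
    Tendsto (fun n => cumNoise β (T n) (t n - 1)) l (nhds σ) := by
  have hlim : Tendsto (fun n => 1 - (1 - cumNoise β (T n) (t n)) / (1 - β (T n) (t n))) l
      (nhds σ) := by
    simpa using ((hσ.const_sub 1).div (hβ.const_sub 1) (by norm_num)).const_sub 1
  refine hlim.congr' ?_
  filter_upwards [ht, hβ.eventually_ne one_ne_zero.symm] with n hn hβn
  obtain ⟨s, hs⟩ := Nat.exists_eq_add_of_le' hn
  rw [hs] at hβn ⊢
  rw [one_sub_cumNoise_succ, mul_div_cancel_right₀ _ (sub_ne_zero.2 hβn.symm), sub_sub_cancel,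
    Nat.add_sub_cancel]

lemma tendsto_revUnif_div (hp0 : 0 ≤ p) (hp : p ≠ 0) {x : Fin H → Fin K} {h : Fin H} {a : Fin K}
    (ha : a ≠ x h) (hσ : σ ∈ Set.Ioc 0 1) (ht : ∀ᶠ n in l, 1 ≤ t n)
    (hσ_lim : Tendsto (fun n => cumNoise β (T n) (t n)) l (nhds σ))
    (hβ_lim : Tendsto (fun n => β (T n) (t n)) l (nhdsWithin 0 {0}ᶜ)) :
    Tendsto (fun n => revUnif K H p β (T n) (t n) h a x / (β (T n) (t n) / K)) l
      (nhds (concreteScore K H p σ x (Function.update x h a))) := by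
  have hpred := tendsto_cumNoise_pred ht hσ_lim (hβ_lim.mono_right nhdsWithin_le_nhds)
  have hrev (n : ι) : revUnif K H p β (T n) (t n) h a x / (β (T n) (t n) / K) =
      (∑ y with y h = a, qUnif K H p (cumNoise β (T n) (t n - 1)) y *
        (stepUnif K H (β (T n) (t n)) x y / (β (T n) (t n) / K))) /
          qUnif K H p (cumNoise β (T n) (t n)) x := by
    rw [revUnif, div_right_comm, Finset.sum_div]
    simp_rw [mul_div_assoc]
  simp_rw [hrev, concreteScore]
  refine Tendsto.div ?_ (((continuous_qUnif p x).tendsto σ).comp hσ_lim)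
    (qUnif_pos hp0 hp hσ x).ne'
  rw [← sum_filter_apply_eq_mul_ite_hammingDist (qUnif K H p σ) ha]
  refine tendsto_finsetSum _ fun y hy => ?_
  have hxy : x ≠ y := fun hxy => ha (hxy ▸ (Finset.mem_filter.1 hy).2.symm)
  exact (((continuous_qUnif p y).tendsto σ).comp hpred).mul ((tendsto_stepUnif_div hxy).comp hβ_lim)

end Reverse

theorem uniform_rate_separation_general {K H : ℕ} {p : (Fin H → Fin K) → ℝ} (hp0 : 0 ≤ p)
    (hp : p ≠ 0) {x : Fin H → Fin K} {h : Fin H} {a : Fin K} (ha : a ≠ x h) :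
    (∀ (β : ℕ → ℕ → ℝ) (t : ℕ → ℕ), ∀ σ ∈ Set.Ioc (0 : ℝ) 1,
      (∀ T, ∀ s ∈ Finset.Icc 1 T, β T s ∈ Set.Ioo (0 : ℝ) 1) →
      (∀ T, 1 ≤ T → t T ∈ Finset.Icc 1 T) →
      Tendsto (fun T => cumNoise β T (t T)) atTop (nhds σ) →
      Tendsto (fun T => β T (t T)) atTop (nhds 0) →
      Tendsto (fun T => revUnif K H p β T (t T) h a x / (β T (t T) / K)) atTop
        (nhds (concreteScore K H p σ x (Function.update x h a)))) ∧
    ∃ C > (0 : ℝ), ∀ σ ∈ Set.Ioc (0 : ℝ) 1,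
      (distSupp K H p (Function.update x h a) < distSupp K H p x →
        |concreteScore K H p σ x (Function.update x h a) - (σ / K)⁻¹ *
          (projMass K H p (Function.update x h a) / projMass K H p x)| ≤ C) ∧
      (distSupp K H p (Function.update x h a) = distSupp K H p x →
        |concreteScore K H p σ x (Function.update x h a) -
          projMass K H p (Function.update x h a) / projMass K H p x| ≤ C * σ) ∧
      (distSupp K H p x < distSupp K H p (Function.update x h a) →
        |concreteScore K H p σ x (Function.update x h a) - (σ / K) *
          (projMass K H p (Function.update x h a) / projMass K H p x)| ≤ C * σ ^ 2) := by
  constructor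
  · intro β t σ hσ hβ ht hσ_lim hβ_lim
    have htime : ∀ᶠ T in atTop, t T ∈ Finset.Icc 1 T := (eventually_ge_atTop 1).mono ht
    exact tendsto_revUnif_div hp0 hp ha hσ (htime.mono fun T hT => (Finset.mem_Icc.1 hT).1) hσ_lim
      (tendsto_nhdsWithin_iff.2 ⟨hβ_lim, htime.mono fun T hT => (hβ T _ hT).1.ne'⟩)
  · have hK : (1 : ℝ) ≤ K := Nat.one_le_cast.2 a.pos
    have hle := distSupp_update_le_add_one hp x h a
    have hge := distSupp_le_update_add_one hp x h a
    obtain ⟨M, hM, hbound⟩ :=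
      exists_abs_concreteScore_sub_le a.pos hp0 hp x (Function.update x h a)
    have hMK : M ≤ M * K := le_mul_of_one_le_right hM.le hK
    refine ⟨M * K, by positivity, fun σ hσ => ?_⟩
    have hσ0 : 0 < σ := hσ.1
    have hscore := hbound σ hσ
    refine ⟨fun htoward => ?_, fun hsame => ?_, fun haway => ?_⟩
    · rw [show (distSupp K H p (Function.update x h a) - distSupp K H p x : ℤ) = -1 by lia,
        zpow_neg_one] at hscore
      exact hscore.trans_eq (by field_simp)
    · rw [hsame, sub_self, zpow_zero, one_mul, one_mul] at hscore
      exact hscore.trans (mul_le_mul_of_nonneg_right hMK hσ0.le)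
    · rw [show (distSupp K H p (Function.update x h a) - distSupp K H p x : ℤ) = 1 by lia,
        zpow_one] at hscore
      calc _ ≤ σ / K * (M * σ) := hscore
        _ ≤ σ * (M * K * σ) := by gcongr; exact div_le_self hσ0.le hK
        _ = M * K * σ ^ 2 := by ring

/-- Theorem 2.1 (Rate separation for uniform diffusion).  Under the noise-schedule
assumption at every `σ ∈ (0,1)`, the limit `L(σ)` of the normalized single-token
reverse probabilities exists, and for small `σ`:
`|L(σ) − (σ/K)⁻¹ ρ| ≤ C` if the edit moves toward the support,
`|L(σ) − ρ| ≤ C σ` if it preserves the distance, and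
`|L(σ) − (σ/K) ρ| ≤ C σ²` if it moves away, where
`ρ = p(proj_D(x^{h→a}))/p(proj_D(x))`. -/
theorem uniform_rate_separation
    (K H : ℕ) (hK : 2 ≤ K) (hH : 1 ≤ H)
    (p : (Fin H → Fin K) → ℝ) (hp0 : ∀ v, 0 ≤ p v) (hp1 : ∑ v, p v = 1)
    (β : ℕ → ℕ → ℝ) (hβ : ∀ T, ∀ t ∈ Finset.Icc 1 T, β T t ∈ Set.Ioo (0 : ℝ) 1)
    (tsel : ℝ → ℕ → ℕ)
    (htsel : ∀ σ ∈ Set.Ioo (0 : ℝ) 1, ∀ T, 1 ≤ T → tsel σ T ∈ Finset.Icc 1 T ∧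
      ∀ s ∈ Finset.Icc 1 T, |cumNoise β T (tsel σ T) - σ| ≤ |cumNoise β T s - σ|)
    (hsched : ∀ σ ∈ Set.Ioo (0 : ℝ) 1,
      Tendsto (fun T => cumNoise β T (tsel σ T)) atTop (nhds σ) ∧
      Tendsto (fun T => β T (tsel σ T)) atTop (nhds 0))
    (x : Fin H → Fin K) (h : Fin H) (a : Fin K) (ha : a ≠ x h) :
    ∃ L : ℝ → ℝ,
      (∀ σ ∈ Set.Ioo (0 : ℝ) 1,
        Tendsto (fun T => revUnif K H p β T (tsel σ T) h a x / (β T (tsel σ T) / K))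
          atTop (nhds (L σ))) ∧
      ∃ C > (0 : ℝ), ∃ σ₀ ∈ Set.Ioo (0 : ℝ) 1, ∀ σ ∈ Set.Ioo (0 : ℝ) σ₀,
        (distSupp K H p (Function.update x h a) < distSupp K H p x →
          |L σ - (σ / K)⁻¹ *
              (projMass K H p (Function.update x h a) / projMass K H p x)| ≤ C) ∧
        (distSupp K H p (Function.update x h a) = distSupp K H p x →
          |L σ - projMass K H p (Function.update x h a) / projMass K H p x| ≤ C * σ) ∧
        (distSupp K H p x < distSupp K H p (Function.update x h a) →
          |L σ - (σ / K) *
              (projMass K H p (Function.update x h a) / projMass K H p x)| ≤ C * σ ^ 2) := by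
  obtain ⟨hlim, C, hC, hbound⟩ :=
    uniform_rate_separation_general hp0 (by rintro rfl; simp at hp1) ha
  exact ⟨fun σ => concreteScore K H p σ x (Function.update x h a), fun σ hσ =>
    hlim β (tsel σ) σ (Set.Ioo_subset_Ioc_self hσ) hβ (fun T hT => (htsel σ hσ T hT).1)
      (hsched σ hσ).1 (hsched σ hσ).2,
    C, hC, 1 / 2, by norm_num, fun σ hσ => hbound σ ⟨hσ.1, by linarith [hσ.2]⟩⟩
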